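/- arXiv:2403.07410 — 3 statements merged into one kernel-verified Lean document; each statement's English description precedes it below -/
import Mathlib

section
/- Let M be a finite set with |M| ≥ 32 and let c ≥ 1 be a real number. Let J be a job set over M with |J| ≤ |M|^c, and let L and l be positive integers satisfying 2·|M|^c ≥ L ≥ C(J) + D(J) and l ≥ 150·c·ln|M| / ln ln|M|. If h is a uniformly random function from J to {0,…,L−1} (drawn uniformly from the finite set of all such functions), then the probability that h is not (L,l)-good for J is at most exp(−|J|·ln(l)/8). -/
open Finset

/-- The congestion of the job set given by the finite type `J` with machine sequences
`seq : J → List M`: the maximum over machines `m` of the total number of pairs `(j,i)`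
with `seq(j)_i = m`. -/
def congestion {M J : Type*} [Fintype M] [DecidableEq M] [Fintype J]
    (seq : J → List M) : ℕ :=
  Finset.univ.sup fun m : M => ∑ j : J, (seq j).count m

/-- The dilation of the job set: the maximum length of a job's machine sequence. -/
def dilation {M J : Type*} [Fintype J] (seq : J → List M) : ℕ :=
  Finset.univ.sup fun j : J => (seq j).length

/-- A bad pattern for the job set given by the finite type `J` with machine sequences
`seq : J → List M`, with parameters `L` and `l`. -/
def IsBadPattern {M J : Type*} [Fintype M] [Fintype J] (seq : J → List M)
    (L l : ℕ) (B : Fin (2 * L) → M → Finset (J × ℕ)) : Prop :=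
  (∀ T m, ∀ p ∈ B T m, (seq p.1)[p.2]? = some m) ∧
  (∀ T m T' m', ∀ p ∈ B T m, ∀ p' ∈ B T' m', p.1 = p'.1 → T = T' ∧ m = m' ∧ p = p') ∧
  (∀ T m, B T m = ∅ ∨ l < (B T m).card) ∧
  Fintype.card J < 2 * ∑ T, ∑ m, (B T m).card

/-- The bad pattern `B` occurs for the hash function `h : J → {0,…,L−1}` if
`h(j) + i = T` for all `T`, `m` and `(j,i) ∈ B T m`. -/
def PatternOccurs {M J : Type*} [Fintype M] [Fintype J]
    {L : ℕ} (B : Fin (2 * L) → M → Finset (J × ℕ)) (h : J → Fin L) : Prop :=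
  ∀ T m, ∀ p ∈ B T m, (h p.1 : ℕ) + p.2 = (T : ℕ)

/-- A hash function `h : J → {0,…,L−1}` is `(L,l)`-good for the job set `J` if no bad
pattern for `(J, L, l)` occurs for `h`. -/
def IsGoodHash {M J : Type*} [Fintype M] [Fintype J] (seq : J → List M)
    (L l : ℕ) (h : J → Fin L) : Prop :=
  ∀ B : Fin (2 * L) → M → Finset (J × ℕ), IsBadPattern seq L l B → ¬ PatternOccurs B h

/-!
A bad pattern involves more than `|J|/2` jobs, and an occurrence of it fixes the hash value of each
of them, so a pattern with `N` pairs occurs with probability at most `L^{-N}`. The union bound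
over patterns is evaluated through a generating function: since `N > |J|/2`, replacing `L^{-N}` by
`(s/L)^N` costs a factor `s^{-|J|/2}`, and the sum of `(s/L)^N` factors over the cells `(T, m)`.
Each cell contributes the empty set and the subsets of size `> l` of a set of at most `L`
occurrences, so its factor is at most `1 + exp(st)/t^l` by a Chernoff-type estimate with a second
tilt `t`. With `s = t = √l` the product of all `2L|M|` factors is at most `l^{1/8}`, which the
surplus in `s^{-|J|/2} = l^{-|J|/4}` absorbs as soon as there is a job.
-/

section FiniteCounting

variable {α β : Type*}

lemma card_mul_pow_card_le_of_forall_eqOn [Fintype α] [Fintype β] {P : (α → β) → Prop}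
    (U : Finset α) (hP : ∀ f g, P f → P g → ∀ a ∈ U, f a = g a) :
    Nat.card {f // P f} * Fintype.card β ^ #U ≤ Fintype.card β ^ Fintype.card α := by
  classical
  have restrict_injective :
      Function.Injective fun (f : {f // P f}) (a : {a // a ∈ Uᶜ}) ↦ f.1 a.1 := by
    intro f g hfg
    ext a
    by_cases ha : a ∈ U
    · exact hP f.1 g.1 f.2 g.2 a ha
    · exact congrFun hfg ⟨a, mem_compl.2 ha⟩
  have card_le : Nat.card {f // P f} ≤ Fintype.card β ^ #Uᶜ := by
    simpa [card_compl] using Nat.card_le_card_of_injective _ restrict_injective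
  calc Nat.card {f // P f} * Fintype.card β ^ #U
      ≤ Fintype.card β ^ #Uᶜ * Fintype.card β ^ #U := by gcongr
    _ = Fintype.card β ^ Fintype.card α := by rw [← pow_add, card_compl_add_card]

lemma sum_pow_card_powerset_filter_le {K : Type*} [Field K] [LinearOrder K]
    [IsStrictOrderedRing K] (S : Finset α) (l : ℕ) {x t : K} (hx : 0 ≤ x) (ht : 1 ≤ t) :
    ∑ A ∈ S.powerset with A.Nonempty → l < #A, x ^ #A ≤ 1 + (1 + t * x) ^ #S / t ^ l := by
  classical
  have tilt (A : Finset α) (hA : A.Nonempty → l < #A) :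
      x ^ #A ≤ (if A = ∅ then 1 else 0) + (t * x) ^ #A / t ^ l := by
    rcases A.eq_empty_or_nonempty with rfl | hne
    · simpa using by positivity
    · rw [if_neg hne.ne_empty, zero_add, le_div_iff₀ (by positivity), mul_pow, mul_comm]
      gcongr
      exact (hA hne).le
  calc ∑ A ∈ S.powerset with A.Nonempty → l < #A, x ^ #A
      ≤ ∑ A ∈ S.powerset with A.Nonempty → l < #A,
          ((if A = ∅ then 1 else 0) + (t * x) ^ #A / t ^ l) :=
        sum_le_sum fun A hA ↦ tilt A (mem_filter.1 hA).2
    _ ≤ ∑ A ∈ S.powerset, ((if A = ∅ then 1 else 0) + (t * x) ^ #A / t ^ l) :=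
        sum_le_sum_of_subset_of_nonneg (filter_subset _ _) fun A _ _ ↦ by positivity
    _ = 1 + (1 + t * x) ^ #S / t ^ l := by
        have binomial : ∑ A ∈ S.powerset, (t * x) ^ #A = (1 + t * x) ^ #S := by
          simpa [add_comm] using sum_pow_mul_eq_add_pow (t * x) 1 S
        rw [sum_add_distrib, ← sum_div, binomial]
        simp

lemma sum_pow_card_powerset_filter_le_exp (S : Finset α) (l : ℕ) {a t : ℝ} {L : ℕ} (hL : 0 < L)
    (hS : #S ≤ L) (ha : 0 ≤ a) (ht : 1 ≤ t) :
    ∑ A ∈ S.powerset with A.Nonempty → l < #A, (a / L) ^ #A ≤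
      Real.exp (Real.exp (t * a) / t ^ l) := by
  have pow_le_exp : (1 + t * (a / L)) ^ #S ≤ Real.exp (t * a) := by
    calc (1 + t * (a / L)) ^ #S ≤ (1 + t * (a / L)) ^ L :=
          pow_le_pow_right₀ (le_add_of_nonneg_right (by positivity)) hS
      _ ≤ Real.exp (t * (a / L)) ^ L := by
          gcongr
          rw [add_comm]
          exact Real.add_one_le_exp _
      _ = Real.exp (t * a) := by
          rw [← Real.exp_nat_mul]
          field_simp
  calc ∑ A ∈ S.powerset with A.Nonempty → l < #A, (a / L) ^ #A
      ≤ 1 + (1 + t * (a / L)) ^ #S / t ^ l :=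
        sum_pow_card_powerset_filter_le S l (by positivity) ht
    _ ≤ Real.exp (t * a) / t ^ l + 1 := by
        rw [add_comm]
        gcongr
    _ ≤ Real.exp (Real.exp (t * a) / t ^ l) := Real.add_one_le_exp _

lemma card_filter_get_eq_count [DecidableEq α] (w : List α) (a : α) :
    #{i : Fin w.length | w.get i = a} = w.count a := by
  simpa [List.Vector.get, eq_comm] using
    Fin.card_filter_univ_eq_vector_get_eq_count a ⟨w, rfl⟩

end FiniteCounting

section Occurrences

variable {M J : Type*} [DecidableEq M] [Fintype J]

open Classical in
/-- The pairs `(j, i)` with `seq(j)_i = m`; every `B T m` of a bad pattern `B` is a subset. -/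
noncomputable def occurrences (seq : J → List M) (m : M) : Finset (J × ℕ) :=
  (univ.sigma fun j ↦ {i : Fin (seq j).length | (seq j).get i = m}).image fun p ↦ (p.1, p.2.1)

lemma mem_occurrences {seq : J → List M} {m : M} {p : J × ℕ} :
    p ∈ occurrences seq m ↔ (seq p.1)[p.2]? = some m := by
  obtain ⟨j, i⟩ := p
  simp only [occurrences, mem_image, mem_sigma, mem_univ, true_and, mem_filter, Prod.mk.injEq,
    List.getElem?_eq_some_iff]
  constructor
  · rintro ⟨⟨j, k⟩, hk, rfl, rfl⟩
    exact ⟨k.2, hk⟩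
  · rintro ⟨hi, hm⟩
    exact ⟨⟨j, i, hi⟩, hm, rfl, rfl⟩

lemma card_occurrences_le_congestion [Fintype M] (seq : J → List M) (m : M) :
    #(occurrences seq m) ≤ congestion seq := by
  classical
  calc #(occurrences seq m)
      ≤ #(univ.sigma fun j ↦ {i : Fin (seq j).length | (seq j).get i = m}) := card_image_le
    _ = ∑ j, (seq j).count m := by simp only [card_sigma, card_filter_get_eq_count]
    _ ≤ congestion seq := le_sup (f := fun m ↦ ∑ j, (seq j).count m) (mem_univ m)

end Occurrences

section Patterns

variable {M J : Type*} [Fintype M] {seq : J → List M} {L l : ℕ}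
  {B : Fin (2 * L) → M → Finset (J × ℕ)}

open Classical in
/-- The jobs in the pairs of the pattern `B`: an occurrence of `B` fixes their hash values. -/
noncomputable def patternJobs (B : Fin (2 * L) → M → Finset (J × ℕ)) : Finset J :=
  univ.biUnion fun q : Fin (2 * L) × M ↦ (B q.1 q.2).image Prod.fst

variable [Fintype J]

lemma IsBadPattern.card_patternJobs (hB : IsBadPattern seq L l B) :
    #(patternJobs B) = ∑ T, ∑ m, #(B T m) := by
  classical
  obtain ⟨-, job_unique, -, -⟩ := hB
  rw [patternJobs, card_biUnion, Fintype.sum_prod_type]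
  · refine sum_congr rfl fun T _ ↦ sum_congr rfl fun m _ ↦ card_image_of_injOn ?_
    exact fun p hp p' hp' hpp' ↦ (job_unique T m T m p hp p' hp' hpp').2.2
  · rintro ⟨T, m⟩ - ⟨T', m'⟩ - hne
    rw [Function.onFun, disjoint_left]
    intro j hj hj'
    obtain ⟨p, hp, rfl⟩ := mem_image.1 hj
    obtain ⟨p', hp', hpp'⟩ := mem_image.1 hj'
    obtain ⟨rfl, rfl, -⟩ := job_unique T m T' m' p hp p' hp' hpp'.symm
    exact hne rfl

lemma PatternOccurs.eq_of_mem_patternJobs {h h' : J → Fin L} (hh : PatternOccurs B h)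
    (hh' : PatternOccurs B h') {j : J} (hj : j ∈ patternJobs B) : h j = h' j := by
  simp only [patternJobs, mem_biUnion, mem_univ, true_and, mem_image] at hj
  obtain ⟨⟨T, m⟩, p, hp, rfl⟩ := hj
  have := hh T m p hp
  have := hh' T m p hp
  omega

lemma IsBadPattern.prob_patternOccurs_le (hB : IsBadPattern seq L l B) (hL : 0 < L) {s : ℝ}
    (hs : 1 ≤ s) :
    (Nat.card {h : J → Fin L // PatternOccurs B h} : ℝ) / (L : ℝ) ^ Fintype.card J ≤
      s ^ (-(Fintype.card J : ℝ) / 2) * ∏ T, ∏ m, (s / L) ^ #(B T m) := by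
  set N := ∑ T, ∑ m, #(B T m) with hN
  have half_lt : (Fintype.card J : ℝ) < 2 * N := mod_cast hB.2.2.2
  have count : (Nat.card {h : J → Fin L // PatternOccurs B h} : ℝ) * (L : ℝ) ^ N ≤
      (L : ℝ) ^ Fintype.card J := by
    have := card_mul_pow_card_le_of_forall_eqOn (patternJobs B)
      fun h h' hh hh' j hj ↦ PatternOccurs.eq_of_mem_patternJobs hh hh' hj
    rw [hB.card_patternJobs, Fintype.card_fin] at this
    exact_mod_cast this
  have tilt : 1 ≤ s ^ (-(Fintype.card J : ℝ) / 2) * s ^ N := by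
    rw [← Real.rpow_natCast, ← Real.rpow_add (by positivity)]
    exact Real.one_le_rpow hs (by linarith)
  calc (Nat.card {h : J → Fin L // PatternOccurs B h} : ℝ) / (L : ℝ) ^ Fintype.card J
      ≤ 1 / (L : ℝ) ^ N := by
        rw [div_le_div_iff₀ (by positivity) (by positivity), one_mul]
        exact count
    _ ≤ s ^ (-(Fintype.card J : ℝ) / 2) * s ^ N / (L : ℝ) ^ N := by gcongr
    _ = s ^ (-(Fintype.card J : ℝ) / 2) * ∏ T, ∏ m, (s / L) ^ #(B T m) := by
        simp only [prod_pow_eq_pow_sum]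
        rw [← hN, div_pow, mul_div_assoc]

end Patterns

section UnionBound

variable {M J : Type*} [Fintype M] [DecidableEq M] [Fintype J] {L l : ℕ}

/-- The families satisfying conditions (i) and (iii) of a bad pattern, which constrain each
`B T m` separately. -/
noncomputable def candidatePatterns (seq : J → List M) (L l : ℕ) :
    Finset (Fin (2 * L) → M → Finset (J × ℕ)) :=
  Fintype.piFinset fun _ ↦ Fintype.piFinset fun m ↦
    {A ∈ (occurrences seq m).powerset | A.Nonempty → l < #A}

lemma IsBadPattern.mem_candidatePatterns {seq : J → List M}
    {B : Fin (2 * L) → M → Finset (J × ℕ)} (hB : IsBadPattern seq L l B) :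
    B ∈ candidatePatterns seq L l := by
  simp only [candidatePatterns, Fintype.mem_piFinset, mem_filter, mem_powerset]
  exact fun T m ↦ ⟨fun p hp ↦ mem_occurrences.2 (hB.1 T m p hp),
    fun hne ↦ (hB.2.2.1 T m).resolve_left hne.ne_empty⟩

open Classical in
lemma card_not_isGoodHash_le_sum (seq : J → List M) (L l : ℕ) :
    Nat.card {h : J → Fin L // ¬ IsGoodHash seq L l h} ≤
      ∑ B ∈ candidatePatterns seq L l with IsBadPattern seq L l B,
        Nat.card {h : J → Fin L // PatternOccurs B h} := by
  refine le_trans (Set.ncard_le_ncard ?_ (Set.toFinite _)) (Finset.set_ncard_biUnion_le _ _)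
  intro h hh
  obtain ⟨B, hB, hBh⟩ : ∃ B, IsBadPattern seq L l B ∧ PatternOccurs B h := by
    have hh : ¬ IsGoodHash seq L l h := hh
    simpa [IsGoodHash] using hh
  exact Set.mem_biUnion (mem_filter.2 ⟨hB.mem_candidatePatterns, hB⟩) hBh

lemma sum_prod_pow_card_candidatePatterns_le {seq : J → List M} (hL : 0 < L)
    (hC : congestion seq ≤ L) (l : ℕ) {s t : ℝ} (hs : 0 ≤ s) (ht : 1 ≤ t) :
    ∑ B ∈ candidatePatterns seq L l, ∏ T, ∏ m, (s / L) ^ #(B T m) ≤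
      Real.exp (2 * L * Fintype.card M * (Real.exp (t * s) / t ^ l)) := by
  calc ∑ B ∈ candidatePatterns seq L l, ∏ T, ∏ m, (s / L) ^ #(B T m)
      = ∏ _T : Fin (2 * L), ∏ m : M,
          ∑ A ∈ (occurrences seq m).powerset with A.Nonempty → l < #A, (s / L) ^ #A := by
        simp only [candidatePatterns, prod_univ_sum]
    _ ≤ ∏ _T : Fin (2 * L), ∏ _m : M, Real.exp (Real.exp (t * s) / t ^ l) := by
        gcongr with T _ m _
        exact sum_pow_card_powerset_filter_le_exp _ l hL
          ((card_occurrences_le_congestion seq m).trans hC) hs ht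
    _ = Real.exp (2 * L * Fintype.card M * (Real.exp (t * s) / t ^ l)) := by
        simp only [prod_const, card_univ, Fintype.card_fin, ← Real.exp_nat_mul]
        push_cast
        ring_nf

theorem prob_hash_not_good_le_rpow_mul_exp {seq : J → List M} (hL : 0 < L)
    (hC : congestion seq ≤ L) (l : ℕ) {s t : ℝ} (hs : 1 ≤ s) (ht : 1 ≤ t) :
    (Nat.card {h : J → Fin L // ¬ IsGoodHash seq L l h} : ℝ) / (L : ℝ) ^ Fintype.card J ≤
      s ^ (-(Fintype.card J : ℝ) / 2) *
        Real.exp (2 * L * Fintype.card M * (Real.exp (t * s) / t ^ l)) := by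
  classical
  calc (Nat.card {h : J → Fin L // ¬ IsGoodHash seq L l h} : ℝ) / (L : ℝ) ^ Fintype.card J
      ≤ ∑ B ∈ candidatePatterns seq L l with IsBadPattern seq L l B,
          (Nat.card {h : J → Fin L // PatternOccurs B h} : ℝ) / (L : ℝ) ^ Fintype.card J := by
        rw [← sum_div]
        gcongr
        exact_mod_cast card_not_isGoodHash_le_sum seq L l
    _ ≤ ∑ B ∈ candidatePatterns seq L l with IsBadPattern seq L l B,
          s ^ (-(Fintype.card J : ℝ) / 2) * ∏ T, ∏ m, (s / L) ^ #(B T m) :=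
        sum_le_sum fun B hB ↦ (mem_filter.1 hB).2.prob_patternOccurs_le hL hs
    _ ≤ ∑ B ∈ candidatePatterns seq L l,
          s ^ (-(Fintype.card J : ℝ) / 2) * ∏ T, ∏ m, (s / L) ^ #(B T m) :=
        sum_le_sum_of_subset_of_nonneg (filter_subset _ _) fun B _ _ ↦ by positivity
    _ ≤ s ^ (-(Fintype.card J : ℝ) / 2) *
          Real.exp (2 * L * Fintype.card M * (Real.exp (t * s) / t ^ l)) := by
        rw [← mul_sum]
        gcongr
        exact sum_prod_pow_card_candidatePatterns_le hL hC l (by positivity) ht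

end UnionBound

section Estimates

open Real

lemma log_add_half_log_le_log {a x y : ℝ} (ha : 0 < a) (hx : 1 < x) (h : 2 * a * x ≤ y * log x) :
    log a + log x / 2 ≤ log y := by
  have hx0 : 0 < x := by positivity
  have hlog : 0 < log x := log_pos hx
  have hy : 0 < y := pos_of_mul_pos_left (lt_of_lt_of_le (by positivity) h) hlog.le
  have log_le_sqrt : log x ≤ 2 * √x := by
    have := log_le_self (sqrt_nonneg x)
    rw [log_sqrt hx0.le] at this
    linarith
  have mul_sqrt_le : a * √x ≤ y := by
    refine le_of_mul_le_mul_right ?_ (sqrt_pos.2 hx0)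
    calc a * √x * √x = a * x := by rw [mul_assoc, mul_self_sqrt hx0.le]
      _ ≤ y * log x / 2 := by linarith
      _ ≤ y * (2 * √x) / 2 := by gcongr
      _ = y * √x := by ring
  calc log a + log x / 2 = log (a * √x) := by
        rw [log_mul ha.ne' (sqrt_pos.2 hx0).ne', log_sqrt hx0.le]
    _ ≤ log y := log_le_log (by positivity) mul_sqrt_le

lemma exp_div_sqrt_pow_self {n : ℕ} (hn : 0 < n) :
    exp n / √n ^ n = exp (n * (1 - log n / 2)) := by
  have hn' : (0 : ℝ) < n := mod_cast hn
  rw [← exp_log (sqrt_pos.2 hn'), ← exp_nat_mul, ← exp_sub, log_sqrt hn'.le]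
  ring_nf

variable {c m : ℝ} {L l : ℕ}

lemma two_add_half_log_log_le_log (hc : 1 ≤ c) (hm : 1 < log m)
    (hl : 150 * c * log m / log (log m) ≤ l) : 2 + log (log m) / 2 ≤ log l := by
  have two_le_log : 2 ≤ log 75 := by
    rw [le_log_iff_exp_le (by norm_num), ← one_add_one_eq_two, exp_add]
    nlinarith [exp_one_lt_three, exp_pos 1]
  have hl' : 2 * 75 * log m ≤ l * log (log m) := by
    rw [div_le_iff₀ (log_pos hm)] at hl
    nlinarith
  linarith [log_add_half_log_le_log (by norm_num) hm hl']

lemma one_lt_of_mul_log_div_log_log_le (hc : 1 ≤ c) (hm : 1 < log m)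
    (hl : 150 * c * log m / log (log m) ≤ l) : (1 : ℝ) < l :=
  (log_pos_iff l.cast_nonneg).1 <| by
    linarith [two_add_half_log_log_le_log hc hm hl, log_pos hm]

lemma exp_div_sqrt_pow_self_le (hc : 1 ≤ c) (hm : 1 < log m)
    (hl : 150 * c * log m / log (log m) ≤ l) : exp l / √l ^ l ≤ exp (-(37 * (c * log m))) := by
  have one_lt_l : 1 < l := mod_cast one_lt_of_mul_log_div_log_log_le hc hm hl
  rw [exp_div_sqrt_pow_self (by omega), exp_le_exp]
  have hloglog : 150 * (c * log m) ≤ l * log (log m) := by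
    rwa [div_le_iff₀ (log_pos hm), mul_assoc] at hl
  have hlog : (l : ℝ) * (2 + log (log m) / 2) ≤ l * log l := by
    gcongr
    exact two_add_half_log_log_le_log hc hm hl
  have : 0 < c * log m := by positivity
  linarith

lemma two_mul_mul_exp_div_sqrt_pow_self_le (hc : 1 ≤ c) (hm0 : 0 < m) (hm : 1 < log m)
    (hL : (L : ℝ) ≤ 2 * m ^ c) (hl : 150 * c * log m / log (log m) ≤ l) :
    2 * L * m * (exp l / √l ^ l) ≤ log l / 8 := by
  set x := c * log m
  have one_le_x : 1 ≤ x := by nlinarith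
  have rpow_eq : m ^ c = exp x := by rw [rpow_def_of_pos hm0, mul_comm]
  have m_le : m ≤ exp x := by
    rw [← log_le_iff_le_exp hm0]
    nlinarith
  have exp_neg_le : exp (-(35 * x)) ≤ 1 / 16 := by
    rw [exp_neg, ← one_div]
    refine one_div_le_one_div_of_le (by norm_num) ?_
    linarith [add_one_le_exp (35 * x)]
  calc 2 * L * m * (exp l / √l ^ l)
      ≤ 2 * (2 * exp x) * exp x * exp (-(37 * x)) := by
        gcongr
        · exact rpow_eq ▸ hL
        · exact exp_div_sqrt_pow_self_le hc hm hl
    _ = 4 * exp (-(35 * x)) := by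
        rw [show -(35 * x) = x + x + -(37 * x) by ring, exp_add, exp_add]
        ring
    _ ≤ log l / 8 := by
        linarith [two_add_half_log_log_le_log hc hm hl, log_pos hm]

end Estimates

theorem prob_hash_not_good_le_general {M J : Type*} [Fintype M] [DecidableEq M] [Fintype J]
    (seq : J → List M) (c : ℝ) (hc : 1 ≤ c) (hM : 3 ≤ Fintype.card M)
    (L l : ℕ) (hL0 : 0 < L) (hL : (L : ℝ) ≤ 2 * (Fintype.card M : ℝ) ^ c)
    (hC : congestion seq ≤ L)
    (hl : 150 * c * Real.log (Fintype.card M) / Real.log (Real.log (Fintype.card M)) ≤ (l : ℝ)) :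
    (Nat.card {h : J → Fin L // ¬ IsGoodHash seq L l h} : ℝ) /
        (Nat.card (J → Fin L) : ℝ) ≤
      Real.exp (-((Fintype.card J : ℝ) * Real.log l) / 8) := by
  rcases isEmpty_or_nonempty J with hJ | hJ
  · rw [Fintype.card_eq_zero, Nat.cast_zero, zero_mul, neg_zero, zero_div, Real.exp_zero]
    exact div_le_one_of_le₀ (mod_cast Finite.card_subtype_le _) (Nat.cast_nonneg _)
  have hM' : (3 : ℝ) ≤ Fintype.card M := mod_cast hM
  have one_lt_log : 1 < Real.log (Fintype.card M) := by
    rw [Real.lt_log_iff_exp_lt (by positivity)]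
    exact Real.exp_one_lt_three.trans_le hM'
  have one_lt_l : (1 : ℝ) < l := one_lt_of_mul_log_div_log_log_le hc one_lt_log hl
  have one_le_sqrt : 1 ≤ √(l : ℝ) := Real.one_le_sqrt.2 one_lt_l.le
  have union_bound := prob_hash_not_good_le_rpow_mul_exp hL0 hC l one_le_sqrt one_le_sqrt
  rw [Real.mul_self_sqrt l.cast_nonneg, Real.rpow_def_of_pos (by positivity),
    Real.log_sqrt l.cast_nonneg, ← Real.exp_add] at union_bound
  rw [Nat.card_fun, Nat.card_fin, Nat.card_eq_fintype_card (α := J), Nat.cast_pow]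
  refine union_bound.trans (Real.exp_le_exp.2 ?_)
  have error_le := two_mul_mul_exp_div_sqrt_pow_self_le hc (by positivity) one_lt_log hL hl
  have log_le : Real.log l ≤ Fintype.card J * Real.log l :=
    le_mul_of_one_le_left (Real.log_pos one_lt_l).le (mod_cast Fintype.card_pos)
  linarith

/-- If `|M| ≥ 32`, `c ≥ 1`, `|J| ≤ |M|^c`, `2·|M|^c ≥ L ≥ C(J) + D(J)` and
`l ≥ 150·c·ln|M| / ln ln|M|`, then the probability that a uniformly random function
`h : J → {0,…,L−1}` is not `(L,l)`-good for `J` is at most `exp(−|J|·ln(l)/8)`. The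
probability is expressed as a ratio of counts of functions. -/
theorem prob_hash_not_good_le {M J : Type*} [Fintype M] [DecidableEq M] [Fintype J]
    (seq : J → List M) (c : ℝ) (hc : 1 ≤ c) (hM : 32 ≤ Fintype.card M)
    (hJ : (Fintype.card J : ℝ) ≤ (Fintype.card M : ℝ) ^ c)
    (L l : ℕ) (hL0 : 0 < L) (hl0 : 0 < l)
    (hL : (L : ℝ) ≤ 2 * (Fintype.card M : ℝ) ^ c)
    (hCD : congestion seq + dilation seq ≤ L)
    (hl : 150 * c * Real.log (Fintype.card M) / Real.log (Real.log (Fintype.card M)) ≤ (l : ℝ)) :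
    (Nat.card {h : J → Fin L // ¬ IsGoodHash seq L l h} : ℝ) /
        (Nat.card (J → Fin L) : ℝ) ≤
      Real.exp (-((Fintype.card J : ℝ) * Real.log l) / 8) :=
  prob_hash_not_good_le_general seq c hc (by omega) L l hL0 hL (by omega) hl
end

section
/- Let M be a finite set with |M| ≥ 32, let c ≥ 1 be a real number, and let I be a finite identifier set with |I| = ⌊|M|^c⌋. Let S be a finite nonempty set of finite sequences of elements of M, and let L and l be positive integers with L ≤ 2·|M|^c and l ≥ 150·c·ln|M| / ln ln|M|. Thenics for k = ⌈16·(ln|S| + (c+1)·ln|M|) / ln(l)⌉ there exist (deterministic) functions g_1, …, g_k : S × I → {0,…,L−1} such that the family (g_1, …, g_k) is (L,l)-good for S; that is, for every S-supported job set J over (S, I) with L ≥ C(J) + D(J), at least one induced function h_i : J → {0,…,L−1} is (L,l)-good for J. -/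
open Finset

/-- The congestion of the job set `J` (a finite set of job indices of type `ι`, each job
`j` carrying the machine sequence `seq j`): the maximum over machines `m` of the total
number of pairs `(j,i)` with `j ∈ J` and `seq(j)_i = m`. -/
def congestionOn {M ι : Type*} [Fintype M] [DecidableEq M]
    (J : Finset ι) (seq : ι → List M) : ℕ :=
  Finset.univ.sup fun m : M => ∑ j ∈ J, (seq j).count m

/-- The dilation of the job set `J`: the maximum length of a job's machine sequence. -/
def dilationOn {M ι : Type*} (J : Finset ι) (seq : ι → List M) : ℕ :=
  J.sup fun j => (seq j).length

/-- A bad pattern for the job set `J` (a finite set of job indices of type `ι`) with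
machine sequences `seq` and parameters `L`, `l`. -/
def IsBadPatternOn {M ι : Type*} [Fintype M] (J : Finset ι) (seq : ι → List M)
    (L l : ℕ) (B : Fin (2 * L) → M → Finset (ι × ℕ)) : Prop :=
  (∀ T m, ∀ p ∈ B T m, p.1 ∈ J ∧ (seq p.1)[p.2]? = some m) ∧
  (∀ T m T' m', ∀ p ∈ B T m, ∀ p' ∈ B T' m', p.1 = p'.1 → T = T' ∧ m = m' ∧ p = p') ∧
  (∀ T m, B T m = ∅ ∨ l < (B T m).card) ∧
  J.card < 2 * ∑ T, ∑ m, (B T m).card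

/-- The bad pattern `B` occurs for `h` if `h(j) + i = T` for all `T`, `m`, `(j,i) ∈ B T m`. -/
def PatternOccursOn {M ι : Type*} [Fintype M]
    {L : ℕ} (B : Fin (2 * L) → M → Finset (ι × ℕ)) (h : ι → Fin L) : Prop :=
  ∀ T m, ∀ p ∈ B T m, (h p.1 : ℕ) + p.2 = (T : ℕ)

/-- `h` is `(L,l)`-good for the job set `J` if no bad pattern for `(J, L, l)` occurs for `h`. -/
def IsGoodHashOn {M ι : Type*} [Fintype M] (J : Finset ι) (seq : ι → List M)
    (L l : ℕ) (h : ι → Fin L) : Prop :=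
  ∀ B : Fin (2 * L) → M → Finset (ι × ℕ), IsBadPatternOn J seq L l B → ¬ PatternOccursOn B h

/-- The family `g : Fin k → (↥S × I → Fin L)` is `(L,l)`-good for the domain set `S`:
for every `S`-supported job set `J` (a finite set of (sequence ∈ S, identifier) pairs with
pairwise distinct identifiers, i.e. injective identifier map) with `L ≥ C(J) + D(J)`, at
least one induced hash function `h_i = g i` is `(L,l)`-good for `J`. -/
def IsGoodFamily {M I : Type*} [Fintype M] [DecidableEq M] [Fintype I]
    (S : Finset (List M)) (L l k : ℕ) (g : Fin k → (↥S × I → Fin L)) : Prop :=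
  ∀ J : Finset (↥S × I), Set.InjOn Prod.snd (J : Set (↥S × I)) →
    congestionOn J (fun p => (p.1 : List M)) + dilationOn J (fun p => (p.1 : List M)) ≤ L →
    ∃ i : Fin k, IsGoodHashOn J (fun p => (p.1 : List M)) L l (g i)

/-!
Choose the `k` functions independently and uniformly at random. For a job set `J` of congestion at
most `L`, weight a bad pattern `B` by `∏ (√l / L) ^ |B_{T,m}|`: since `B` pins down more than
`|J| / 2` values of a hash function, `B` occurs with probability at most `l ^ (-|J| / 4)` times its
weight. The total weight of all patterns factors over the `2L|M|` cells `(T, m)`, and a cell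
contributes at most `1 + e ^ l / √l ^ l` because at most `L` requests go to machine `m`. The choice
of `l` makes the product at most `e`, so a nonempty `J` sees a bad hash function with probability at
most `l ^ (-|J| / 16)`, and all `k` functions are bad for `J` with probability at most
`(l ^ (-k / 16)) ^ |J|`. The choice of `k` makes the sum of these bounds over all nonempty `J` less
than `1`.
-/

section UnionBounds

variable {α β ι : Type*}

theorem exists_family_forall_exists_notMem [Fintype α] {V : Finset β} (bad : β → Finset α) {k : ℕ}
    (h : ∑ x ∈ V, #(bad x) ^ k < Fintype.card α ^ k) :
    ∃ g : Fin k → α, ∀ x ∈ V, ∃ i, g i ∉ bad x := by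
  classical
  have hcard : #(V.biUnion fun x => Fintype.piFinset fun _ : Fin k => bad x) <
      #(univ : Finset (Fin k → α)) := by
    refine card_biUnion_le.trans_lt ?_
    simpa using h
  obtain ⟨g, -, hg⟩ := exists_mem_notMem_of_card_lt_card hcard
  exact ⟨g, by simpa using hg⟩

theorem sum_powerset_pow_card (w : ℝ) (s : Finset α) :
    ∑ A ∈ s.powerset, w ^ #A = (1 + w) ^ #s := by
  simpa [add_comm] using sum_pow_mul_eq_add_pow w 1 s

theorem one_add_pow_le_exp_mul {x : ℝ} (hx : 0 ≤ x) (n : ℕ) :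
    (1 + x) ^ n ≤ Real.exp (n * x) := by
  simpa using Real.prod_one_add_le_exp_sum (range n) (f := fun _ => x) fun _ => hx

theorem sum_inv_pow_card_nonempty_lt_one [Fintype α] {q : ℝ} (hq : 0 < q)
    (hα : 2 * Fintype.card α ≤ q) :
    ∑ J : Finset α with J.Nonempty, q⁻¹ ^ #J < 1 := by
  classical
  have hempty : ∑ J : Finset α with ¬ J.Nonempty, q⁻¹ ^ #J = 1 := by
    simp [not_nonempty_iff_eq_empty, filter_eq']
  have htotal : ∑ J : Finset α, q⁻¹ ^ #J < 2 := calc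
    ∑ J : Finset α, q⁻¹ ^ #J = (1 + q⁻¹) ^ Fintype.card α := by
      rw [← powerset_univ, sum_powerset_pow_card, card_univ]
    _ ≤ Real.exp (Fintype.card α * q⁻¹) := one_add_pow_le_exp_mul (by positivity) _
    _ ≤ Real.exp (1 / 2) := by
      gcongr
      rw [← div_eq_mul_inv, div_le_iff₀ hq]
      linarith
    _ < 2 := by
      rw [← Real.lt_log_iff_exp_lt two_pos]
      linarith [Real.log_two_gt_d9]
  rw [← sum_filter_add_sum_filter_not univ Finset.Nonempty, hempty] at htotal
  linarith

theorem card_piFinset_mul_pow_le [Fintype ι] [DecidableEq ι] [Fintype β] (U : Finset ι)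
    (t : ι → Finset β) (ht : ∀ x ∈ U, #(t x) ≤ 1) :
    #(Fintype.piFinset t) * Fintype.card β ^ #U ≤ Fintype.card β ^ Fintype.card ι := calc
  #(Fintype.piFinset t) * Fintype.card β ^ #U
      = ∏ x, #(t x) * if x ∈ U then Fintype.card β else 1 := by
    rw [Fintype.card_piFinset, prod_mul_distrib, prod_ite_mem, univ_inter, prod_const]
  _ ≤ ∏ _x : ι, Fintype.card β := by
    refine prod_le_prod' fun x _ => ?_
    split_ifs with hx
    · exact mul_le_of_le_one_left (Nat.zero_le _) (ht x hx)
    · simpa using card_le_univ (t x)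
  _ = Fintype.card β ^ Fintype.card ι := by rw [prod_const, card_univ]

end UnionBounds

section EmptyOrLargeSubsets

variable {α : Type*}

/-- The subsets of `P` that are empty or have more than `l` elements: the values that a bad pattern
may take in a cell `(T, m)` when `P` is the set of requests to the machine `m`. -/
def emptyOrLargeSubsets (P : Finset α) (l : ℕ) : Finset (Finset α) :=
  {A ∈ P.powerset | #A = 0 ∨ l < #A}

theorem sum_emptyOrLargeSubsets_pow_card_le (P : Finset α) (l : ℕ) {w v : ℝ} (hw : 0 ≤ w)
    (hv : 1 ≤ v) :
    ∑ A ∈ emptyOrLargeSubsets P l, w ^ #A ≤ 1 + (1 + v * w) ^ #P / v ^ l := by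
  classical
  have hv0 : 0 < v := by positivity
  have hterm (A : Finset α) (hA : l < #A) : w ^ #A ≤ (v * w) ^ #A / v ^ l := by
    rw [le_div_iff₀ (by positivity), mul_pow, mul_comm]
    gcongr
  calc ∑ A ∈ emptyOrLargeSubsets P l, w ^ #A
      ≤ ∑ A ∈ P.powerset, ((if A = ∅ then 1 else 0) + (v * w) ^ #A / v ^ l) := by
        rw [emptyOrLargeSubsets, sum_filter]
        refine sum_le_sum fun A _ => ?_
        rcases A.eq_empty_or_nonempty with rfl | hA
        · simp [hv0.le]
        · simp only [card_eq_zero, hA.ne_empty, false_or, if_false, zero_add]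
          split_ifs with hlA
          · exact hterm A hlA
          · positivity
    _ = 1 + (1 + v * w) ^ #P / v ^ l := by
        rw [sum_add_distrib, ← sum_div, sum_powerset_pow_card]
        simp

theorem sum_emptyOrLargeSubsets_div_pow_card_le {P : Finset α} {L : ℕ} (hL : 0 < L) (hP : #P ≤ L)
    (l : ℕ) {w v : ℝ} (hw : 0 ≤ w) (hv : 1 ≤ v) :
    ∑ A ∈ emptyOrLargeSubsets P l, (w / L) ^ #A ≤ 1 + Real.exp (v * w) / v ^ l := by
  refine (sum_emptyOrLargeSubsets_pow_card_le P l (by positivity) hv).trans ?_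
  gcongr
  calc (1 + v * (w / L)) ^ #P
      ≤ (1 + v * (w / L)) ^ L := pow_le_pow_right₀ (le_add_of_nonneg_right (by positivity)) hP
    _ ≤ Real.exp (L * (v * (w / L))) := one_add_pow_le_exp_mul (by positivity) L
    _ = Real.exp (v * w) := by field_simp

end EmptyOrLargeSubsets

section Requests

variable {M ι : Type*} [DecidableEq M]

theorem card_filter_range_getElem?_eq_some (s : List M) (m : M) {n : ℕ} (hn : s.length ≤ n) :
    #{i ∈ range n | s[i]? = some m} = s.count m := by
  induction s generalizing n with
  | nil => simp
  | cons a t ih =>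
    obtain ⟨n, rfl⟩ : ∃ n', n = n' + 1 := Nat.exists_eq_succ_of_ne_zero (by grind)
    have iht := ih (n := n) (by simpa using hn)
    rw [card_filter] at iht ⊢
    rw [sum_range_succ', List.count_cons]
    simp only [List.getElem?_cons_succ, List.getElem?_cons_zero, Option.some.injEq, beq_iff_eq, iht]

/-- The pairs `(j, i)` such that the `i`-th entry of the job `j ∈ J` is the machine `m`. -/
def requests (J : Finset ι) (seq : ι → List M) (m : M) : Finset (ι × ℕ) :=
  {p ∈ J ×ˢ range (dilationOn J seq) | (seq p.1)[p.2]? = some m}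

variable {J : Finset ι} {seq : ι → List M}

theorem mem_requests {m : M} {p : ι × ℕ} :
    p ∈ requests J seq m ↔ p.1 ∈ J ∧ (seq p.1)[p.2]? = some m := by
  have hlt (hp : p.1 ∈ J) (hm : (seq p.1)[p.2]? = some m) : p.2 < dilationOn J seq :=
    (List.getElem?_eq_some_iff.1 hm).1.trans_le (le_sup (f := fun j => (seq j).length) hp)
  simp only [requests, mem_filter, mem_product, mem_range]
  tauto

theorem card_requests (m : M) : #(requests J seq m) = ∑ j ∈ J, (seq j).count m := by
  rw [requests, card_filter, sum_product]
  refine sum_congr rfl fun j hj => ?_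
  rw [← card_filter]
  exact card_filter_range_getElem?_eq_some _ _ (le_sup (f := fun j => (seq j).length) hj)

theorem card_requests_le_congestionOn [Fintype M] (m : M) :
    #(requests J seq m) ≤ congestionOn J seq :=
  (card_requests m).trans_le
    (le_sup (f := fun m : M => ∑ j ∈ J, (seq j).count m) (mem_univ m))

end Requests

section BadHashes

variable {M ι : Type*} [Fintype M] {J : Finset ι} {seq : ι → List M} {L l : ℕ}

theorem IsBadPatternOn.nonempty {B : Fin (2 * L) → M → Finset (ι × ℕ)}
    (hB : IsBadPatternOn J seq L l B) : J.Nonempty := by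
  obtain ⟨hmem, -, -, hcard⟩ := hB
  have hsum : ∑ T, ∑ m, #(B T m) ≠ 0 := by omega
  obtain ⟨T, -, hT⟩ := exists_ne_zero_of_sum_ne_zero hsum
  obtain ⟨m, -, hm⟩ := exists_ne_zero_of_sum_ne_zero hT
  obtain ⟨p, hp⟩ := card_ne_zero.1 hm
  exact ⟨p.1, (hmem T m p hp).1⟩

theorem IsBadPatternOn.card_biUnion_image_fst [DecidableEq ι]
    {B : Fin (2 * L) → M → Finset (ι × ℕ)} (hB : IsBadPatternOn J seq L l B) :
    #(univ.biUnion fun a : Fin (2 * L) × M => (B a.1 a.2).image Prod.fst) =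
      ∑ a : Fin (2 * L) × M, #(B a.1 a.2) := by
  obtain ⟨-, hunique, -, -⟩ := hB
  rw [card_biUnion]
  · exact sum_congr rfl fun a _ => card_image_of_injOn fun p hp q hq hpq =>
      (hunique _ _ _ _ p hp q hq hpq).2.2
  · refine fun a _ b _ hab => disjoint_left.2 fun x hxa hxb => hab ?_
    obtain ⟨p, hp, rfl⟩ := mem_image.1 hxa
    obtain ⟨q, hq, hqp⟩ := mem_image.1 hxb
    obtain ⟨hT, hm, -⟩ := hunique _ _ _ _ p hp q hq hqp.symm
    exact Prod.ext hT hm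

variable [Fintype ι] [DecidableEq ι]

open Classical in
theorem IsBadPatternOn.card_occurring_mul_pow_le {B : Fin (2 * L) → M → Finset (ι × ℕ)}
    (hB : IsBadPatternOn J seq L l B) :
    #{h : ι → Fin L | PatternOccursOn B h} * L ^ ∑ a : Fin (2 * L) × M, #(B a.1 a.2) ≤
      L ^ Fintype.card ι := by
  let allowed (x : ι) : Finset (Fin L) := {v | ∀ T m, ∀ p ∈ B T m, p.1 = x → (v : ℕ) + p.2 = T}
  have hsub : ({h : ι → Fin L | PatternOccursOn B h} : Finset _) ⊆ Fintype.piFinset allowed := by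
    intro h hh
    have hoccurs : PatternOccursOn B h := (mem_filter_univ _).1 hh
    simp only [Fintype.mem_piFinset, allowed, mem_filter_univ]
    rintro _ T m p hp rfl
    exact hoccurs T m p hp
  have hpinned (x) (hx : x ∈ univ.biUnion fun a : Fin (2 * L) × M => (B a.1 a.2).image Prod.fst) :
      #(allowed x) ≤ 1 := by
    obtain ⟨a, -, hxa⟩ := mem_biUnion.1 hx
    obtain ⟨p, hp, rfl⟩ := mem_image.1 hxa
    refine card_le_one.2 fun v hv w hw => Fin.ext ?_
    simp only [allowed, mem_filter_univ] at hv hw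
    have hvT := hv a.1 a.2 p hp rfl
    have hwT := hw a.1 a.2 p hp rfl
    omega
  have hcount := card_piFinset_mul_pow_le _ allowed hpinned
  rw [hB.card_biUnion_image_fst, Fintype.card_fin] at hcount
  exact (Nat.mul_le_mul_right _ (card_le_card hsub)).trans hcount

open Classical in
/-- The functions `ι → Fin L` that are not `(L, l)`-good for the job set `J`. -/
noncomputable def badHashes (J : Finset ι) (seq : ι → List M) (L l : ℕ) : Finset (ι → Fin L) :=
  {h | ¬ IsGoodHashOn J seq L l h}

theorem mem_badHashes {h : ι → Fin L} : h ∈ badHashes J seq L l ↔ ¬ IsGoodHashOn J seq L l h := by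
  simp [badHashes]

open Classical in
theorem badHashes_subset_biUnion [DecidableEq M] :
    badHashes J seq L l ⊆
      {B ∈ Fintype.piFinset fun a : Fin (2 * L) × M => emptyOrLargeSubsets (requests J seq a.2) l |
          IsBadPatternOn J seq L l fun T m => B (T, m)}.biUnion
        fun B => {h | PatternOccursOn (fun T m => B (T, m)) h} := by
  intro h hh
  simp only [mem_badHashes, IsGoodHashOn, not_forall, not_not] at hh
  obtain ⟨B, hB, hoccurs⟩ := hh
  have hcells : (fun a => B a.1 a.2) ∈ Fintype.piFinset fun a : Fin (2 * L) × M =>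
      emptyOrLargeSubsets (requests J seq a.2) l := by
    refine Fintype.mem_piFinset.2 fun a => mem_filter.2 ⟨mem_powerset.2 fun p hp => ?_, ?_⟩
    · exact mem_requests.2 (hB.1 a.1 a.2 p hp)
    · exact (hB.2.2.1 a.1 a.2).imp_left card_eq_zero.2
  exact mem_biUnion.2 ⟨_, mem_filter.2 ⟨hcells, hB⟩, mem_filter.2 ⟨mem_univ _, hoccurs⟩⟩

open Classical in
theorem IsBadPatternOn.card_occurring_mul_pow_card_le {B : Fin (2 * L) × M → Finset (ι × ℕ)}
    (hL : 0 < L) {y : ℝ} (hy : 1 ≤ y) (hB : IsBadPatternOn J seq L l fun T m => B (T, m)) :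
    #{h : ι → Fin L | PatternOccursOn (fun T m => B (T, m)) h} * y ^ #J ≤
      (L : ℝ) ^ Fintype.card ι * ∏ a, (y ^ 2 / L) ^ #(B a) := by
  have hcount : (#{h : ι → Fin L | PatternOccursOn (fun T m => B (T, m)) h} : ℝ) *
      L ^ ∑ a, #(B a) ≤ L ^ Fintype.card ι := mod_cast hB.card_occurring_mul_pow_le
  have hpow : y ^ #J ≤ (y ^ 2) ^ ∑ a, #(B a) := by
    rw [← pow_mul, Fintype.sum_prod_type]
    exact pow_le_pow_right₀ hy hB.2.2.2.le
  rw [prod_pow_eq_pow_sum, div_pow, ← mul_div_assoc, le_div_iff₀ (by positivity), mul_right_comm]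
  gcongr

theorem card_badHashes_mul_pow_card_le [DecidableEq M] (hL : 0 < L)
    (hC : congestionOn J seq ≤ L) {y v : ℝ} (hy : 1 ≤ y) (hv : 1 ≤ v) :
    #(badHashes J seq L l) * y ^ #J ≤
      (L : ℝ) ^ Fintype.card ι *
        Real.exp (2 * L * Fintype.card M * (Real.exp (v * y ^ 2) / v ^ l)) := by
  classical
  let cells (a : Fin (2 * L) × M) := emptyOrLargeSubsets (requests J seq a.2) l
  let patterns := {B ∈ Fintype.piFinset cells | IsBadPatternOn J seq L l fun T m => B (T, m)}
  have hunion : (#(badHashes J seq L l) : ℝ) ≤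
      ∑ B ∈ patterns, (#{h : ι → Fin L | PatternOccursOn (fun T m => B (T, m)) h} : ℝ) :=
    mod_cast (card_le_card badHashes_subset_biUnion).trans card_biUnion_le
  calc #(badHashes J seq L l) * y ^ #J
      ≤ ∑ B ∈ patterns, #{h : ι → Fin L | PatternOccursOn (fun T m => B (T, m)) h} * y ^ #J := by
        rw [← sum_mul]
        gcongr
    _ ≤ ∑ B ∈ patterns, (L : ℝ) ^ Fintype.card ι * ∏ a, (y ^ 2 / L) ^ #(B a) :=
        sum_le_sum fun B hB => (mem_filter.1 hB).2.card_occurring_mul_pow_card_le hL hy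
    _ ≤ ∑ B ∈ Fintype.piFinset cells, (L : ℝ) ^ Fintype.card ι * ∏ a, (y ^ 2 / L) ^ #(B a) :=
        sum_le_sum_of_subset_of_nonneg (filter_subset _ _) fun _ _ _ => by positivity
    _ = (L : ℝ) ^ Fintype.card ι * ∏ a, ∑ A ∈ cells a, (y ^ 2 / L) ^ #A := by
        rw [← mul_sum, prod_univ_sum]
    _ ≤ (L : ℝ) ^ Fintype.card ι *
          ∏ _a : Fin (2 * L) × M, (1 + Real.exp (v * y ^ 2) / v ^ l) := by
        gcongr with a
        exact sum_emptyOrLargeSubsets_div_pow_card_le hL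
          ((card_requests_le_congestionOn a.2).trans hC) l (by positivity) hv
    _ ≤ (L : ℝ) ^ Fintype.card ι *
          Real.exp (2 * L * Fintype.card M * (Real.exp (v * y ^ 2) / v ^ l)) := by
        gcongr
        refine (Real.prod_one_add_le_exp_sum _ fun _ => by positivity).trans_eq ?_
        simp

theorem card_badHashes_mul_rpow_le [DecidableEq M] (hL : 0 < L) (hJ : J.Nonempty)
    (hC : congestionOn J seq ≤ L) (hlog : 16 / 3 ≤ Real.log l)
    (hcells : 2 * L * Fintype.card M * Real.exp l ≤ √l ^ l) :
    #(badHashes J seq L l) * ((l : ℝ) ^ (1 / 16 : ℝ)) ^ #J ≤ (L : ℝ) ^ Fintype.card ι := by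
  set y : ℝ := (l : ℝ) ^ (1 / 4 : ℝ) with hy
  set z : ℝ := (l : ℝ) ^ (1 / 16 : ℝ) with hz
  have hl : (1 : ℝ) < l := (Real.log_pos_iff (by positivity)).1 (by linarith)
  have hl0 : (0 : ℝ) < l := by positivity
  have hy_sq : y ^ 2 = √l := by
    rw [hy, ← Real.rpow_mul_natCast hl0.le, Real.sqrt_eq_rpow]
    norm_num
  have hzy : z * Real.exp 1 ≤ y := by
    rw [hz, hy, Real.rpow_def_of_pos hl0, Real.rpow_def_of_pos hl0, ← Real.exp_add]
    gcongr
    linarith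
  have hbad := card_badHashes_mul_pow_card_le (l := l) hL hC (Real.one_le_rpow hl.le (by norm_num))
    (Real.one_le_sqrt.2 hl.le) (y := y)
  rw [hy_sq, Real.mul_self_sqrt hl0.le, ← mul_div_assoc] at hbad
  refine le_of_mul_le_mul_right ?_ (Real.exp_pos 1)
  calc #(badHashes J seq L l) * z ^ #J * Real.exp 1
      ≤ #(badHashes J seq L l) * z ^ #J * Real.exp 1 ^ #J := by
        gcongr
        exact le_self_pow₀ (Real.one_le_exp zero_le_one) hJ.card_pos.ne'
    _ = #(badHashes J seq L l) * (z * Real.exp 1) ^ #J := by ring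
    _ ≤ #(badHashes J seq L l) * y ^ #J := by gcongr
    _ ≤ _ := hbad
    _ ≤ (L : ℝ) ^ Fintype.card ι * Real.exp 1 := by
        gcongr
        exact (div_le_one (by positivity)).2 hcells

end BadHashes

theorem exists_family_isGoodHashOn {M ι : Type*} [Fintype M] [DecidableEq M] [Fintype ι]
    (seq : ι → List M) {L l k : ℕ} (hL : 0 < L) (hlog : 16 / 3 ≤ Real.log l)
    (hcells : 2 * L * Fintype.card M * Real.exp l ≤ √l ^ l) (hk0 : 0 < k)
    (hk : 2 * Fintype.card ι ≤ ((l : ℝ) ^ (1 / 16 : ℝ)) ^ k) :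
    ∃ g : Fin k → ι → Fin L,
      ∀ J : Finset ι, congestionOn J seq ≤ L → ∃ i, IsGoodHashOn J seq L l (g i) := by
  classical
  set z : ℝ := (l : ℝ) ^ (1 / 16 : ℝ)
  have hz0 : 0 < z := Real.rpow_pos_of_pos
    (zero_lt_one.trans ((Real.log_pos_iff (by positivity)).1 (by linarith))) _
  let V : Finset (Finset ι) := {J | J.Nonempty ∧ congestionOn J seq ≤ L}
  have hbad (J) (hJ : J ∈ V) :
      (#(badHashes J seq L l) : ℝ) ^ k ≤ (L ^ Fintype.card ι) ^ k * (z ^ k)⁻¹ ^ #J := by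
    obtain ⟨hne, hC⟩ := mem_filter_univ _ |>.1 hJ
    rw [inv_pow, ← div_eq_mul_inv, le_div_iff₀ (by positivity), pow_right_comm, ← mul_pow]
    gcongr
    exact card_badHashes_mul_rpow_le hL hne hC hlog hcells
  have hsum : ∑ J ∈ V, #(badHashes J seq L l) ^ k < Fintype.card (ι → Fin L) ^ k := by
    rw [Fintype.card_fun, Fintype.card_fin, ← Nat.cast_lt (α := ℝ)]
    push_cast
    calc ∑ J ∈ V, (#(badHashes J seq L l) : ℝ) ^ k
        ≤ ∑ J ∈ V, ((L : ℝ) ^ Fintype.card ι) ^ k * (z ^ k)⁻¹ ^ #J := sum_le_sum hbad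
      _ ≤ ((L : ℝ) ^ Fintype.card ι) ^ k * ∑ J : Finset ι with J.Nonempty, (z ^ k)⁻¹ ^ #J := by
          rw [← mul_sum]
          gcongr
          exact monotone_filter_right _ fun _ _ hJ => hJ.1
      _ < ((L : ℝ) ^ Fintype.card ι) ^ k :=
          mul_lt_of_lt_one_right (by positivity)
            (sum_inv_pow_card_nonempty_lt_one (by positivity) hk)
  obtain ⟨g, hg⟩ := exists_family_forall_exists_notMem _ hsum
  refine ⟨g, fun J hC => ?_⟩
  rcases J.eq_empty_or_nonempty with rfl | hJ
  · exact ⟨⟨0, hk0⟩, fun B hB => absurd hB.nonempty not_nonempty_empty⟩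
  · simpa [mem_badHashes] using hg J (mem_filter_univ _ |>.2 ⟨hJ, hC⟩)

section Parameters

theorem exp_sixteen_div_three_le : Real.exp (16 / 3) ≤ 300 := by
  refine le_of_pow_le_pow_left₀ three_ne_zero (by norm_num) ?_
  calc Real.exp (16 / 3) ^ 3 = Real.exp 1 ^ 16 := by
        rw [← Real.exp_nat_mul, ← Real.exp_nat_mul]
        norm_num
    _ ≤ 2.7182818286 ^ 16 := by gcongr; exact Real.exp_one_lt_d9.le
    _ ≤ 300 ^ 3 := by norm_num

theorem two_mul_log_le_self {x : ℝ} (hx : 0 < x) : 2 * Real.log x ≤ x := by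
  simpa [Real.exp_log hx] using Real.two_mul_le_exp (x := Real.log x)

variable {n c l : ℝ}

theorem one_lt_log_of_three_le (hn : 3 ≤ n) : 1 < Real.log n :=
  (Real.lt_log_iff_exp_lt (by linarith)).2 (Real.exp_one_lt_three.trans_le hn)

theorem sixteen_div_three_le_log (hn : 3 ≤ n) (hc : 1 ≤ c)
    (hl : 150 * c * Real.log n / Real.log (Real.log n) ≤ l) : 16 / 3 ≤ Real.log l := by
  have hx := one_lt_log_of_three_le hn
  have hu := Real.log_pos hx
  have hl300 : 300 ≤ l := calc
    300 ≤ 150 * c * Real.log n / Real.log (Real.log n) := by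
      rw [le_div_iff₀ hu]
      nlinarith [two_mul_log_le_self (zero_lt_one.trans hx)]
    _ ≤ l := hl
  rw [Real.le_log_iff_exp_le (by linarith)]
  exact exp_sixteen_div_three_le.trans hl300

theorem log_log_div_two_le_log (hn : 3 ≤ n) (hc : 1 ≤ c)
    (hl : 150 * c * Real.log n / Real.log (Real.log n) ≤ l) :
    Real.log (Real.log n) / 2 ≤ Real.log l := by
  have hx := one_lt_log_of_three_le hn
  have hu := Real.log_pos hx
  have hsqrt : 0 < √(Real.log n) := Real.sqrt_pos.2 (by linarith)
  rw [← Real.log_sqrt (by linarith)]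
  refine Real.log_le_log hsqrt (le_trans ?_ hl)
  rw [le_div_iff₀ hu]
  calc √(Real.log n) * Real.log (Real.log n) ≤ √(Real.log n) * √(Real.log n) := by
        gcongr
        have hlog := two_mul_log_le_self hsqrt
        rw [Real.log_sqrt (by linarith)] at hlog
        linarith
    _ = Real.log n := Real.mul_self_sqrt (by linarith)
    _ ≤ 150 * c * Real.log n := le_mul_of_one_le_left (by linarith) (by linarith)

theorem log_four_add_mul_log_le (hn : 3 ≤ n) (hc : 1 ≤ c)
    (hl : 150 * c * Real.log n / Real.log (Real.log n) ≤ l) :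
    Real.log 4 + (c + 1) * Real.log n ≤ l * (Real.log l / 2 - 1) := by
  have hx := one_lt_log_of_three_le hn
  have hu := Real.log_pos hx
  have hl0 : 0 < l := lt_of_lt_of_le (by positivity) hl
  have hlog := sixteen_div_three_le_log hn hc hl
  have hloglog := log_log_div_two_le_log hn hc hl
  have hlog4 : Real.log 4 ≤ 2 := by
    rw [show (4 : ℝ) = 2 ^ 2 by norm_num, Real.log_pow]
    push_cast
    linarith [Real.log_two_lt_d9]
  calc Real.log 4 + (c + 1) * Real.log n ≤ 150 * c * Real.log n / 8 := by nlinarith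
    _ ≤ l * Real.log (Real.log n) / 8 := by
        rw [div_le_iff₀ hu] at hl
        linarith
    _ = l * (Real.log (Real.log n) / 8) := by ring
    _ ≤ l * (Real.log l / 2 - 1) := by
        gcongr
        linarith

theorem two_mul_mul_exp_le_sqrt_pow {L l : ℕ} (hn : 3 ≤ n) (hc : 1 ≤ c) (hL : L ≤ 2 * n ^ c)
    (hl : 150 * c * Real.log n / Real.log (Real.log n) ≤ l) :
    2 * L * n * Real.exp l ≤ √l ^ l := by
  have hn0 : 0 < n := by linarith
  have hx := one_lt_log_of_three_le hn
  have hu := Real.log_pos hx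
  have hl0 : (0 : ℝ) < l := lt_of_lt_of_le (by positivity) hl
  calc 2 * L * n * Real.exp l ≤ 2 * (2 * n ^ c) * n * Real.exp l := by gcongr
    _ = Real.exp (Real.log 4 + (c + 1) * Real.log n + l) := by
        rw [Real.exp_add, Real.exp_add, Real.exp_log four_pos, mul_comm (c + 1),
          ← Real.rpow_def_of_pos hn0, Real.rpow_add_one hn0.ne']
        ring
    _ ≤ Real.exp (l * (Real.log l / 2)) := by
        gcongr
        linarith [log_four_add_mul_log_le hn hc hl]
    _ = √l ^ l := by
        rw [Real.exp_nat_mul, ← Real.log_sqrt hl0.le, Real.exp_log (Real.sqrt_pos.2 hl0)]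

theorem mul_rpow_le_rpow_pow_ceil {s : ℝ} (hs : 0 < s) (hn : 0 < n) (hl : 1 < l) :
    s * n ^ c ≤ (l ^ (1 / 16 : ℝ)) ^ ⌈16 * (Real.log s + c * Real.log n) / Real.log l⌉₊ := by
  have hl0 : 0 < l := by linarith
  have hk := (div_le_iff₀ (Real.log_pos hl)).1
    (Nat.le_ceil (16 * (Real.log s + c * Real.log n) / Real.log l))
  rw [← Real.rpow_mul_natCast hl0.le, ← Real.log_le_log_iff (by positivity) (by positivity),
    Real.log_mul hs.ne' (by positivity), Real.log_rpow hn, Real.log_rpow hl0]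
  linarith

end Parameters

theorem exists_good_family_general {M ι : Type*} [Fintype M] [DecidableEq M] [Fintype ι]
    (c : ℝ) (hc : 1 ≤ c) (hM : 3 ≤ Fintype.card M) (seq : ι → List M) (s : ℝ) (hs : 1 ≤ s)
    (hι : Fintype.card ι ≤ s * (Fintype.card M : ℝ) ^ c)
    (L l : ℕ) (hL0 : 0 < L) (hL : (L : ℝ) ≤ 2 * (Fintype.card M : ℝ) ^ c)
    (hl : 150 * c * Real.log (Fintype.card M) / Real.log (Real.log (Fintype.card M)) ≤ (l : ℝ)) :
    ∃ g : Fin ⌈16 * (Real.log s + (c + 1) * Real.log (Fintype.card M)) / Real.log l⌉₊ →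
        ι → Fin L,
      ∀ J : Finset ι, congestionOn J seq ≤ L → ∃ i, IsGoodHashOn J seq L l (g i) := by
  have hn3 : (3 : ℝ) ≤ Fintype.card M := mod_cast hM
  set n : ℝ := (Fintype.card M : ℝ)
  have hlogn := one_lt_log_of_three_le hn3
  have hlog := sixteen_div_three_le_log hn3 hc hl
  have hl1 : (1 : ℝ) < l := (Real.log_pos_iff (by positivity)).1 (by linarith)
  have hk0 : 0 < 16 * (Real.log s + (c + 1) * Real.log n) / Real.log l := by
    have := Real.log_nonneg hs
    positivity
  refine exists_family_isGoodHashOn seq hL0 hlog (two_mul_mul_exp_le_sqrt_pow hn3 hc hL hl)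
    (Nat.ceil_pos.2 hk0) ?_
  calc 2 * (Fintype.card ι : ℝ) ≤ n * (s * n ^ c) := by gcongr; linarith
    _ = s * n ^ (c + 1) := by rw [Real.rpow_add_one (by positivity)]; ring
    _ ≤ _ := mul_rpow_le_rpow_pow_ceil (by positivity) (by positivity) hl1

/-- Let `|M| ≥ 32`, `c ≥ 1`, `|I| = ⌊|M|^c⌋`, `S` a nonempty finite set of machine
sequences, `L ≤ 2·|M|^c` and `l ≥ 150·c·ln|M| / ln ln|M|`. Then for
`k = ⌈16·(ln|S| + (c+1)·ln|M|) / ln(l)⌉` there exist deterministic functions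
`g_1, …, g_k : S × I → {0,…,L−1}` such that the family `(g_1, …, g_k)` is `(L,l)`-good
for `S`: for every `S`-supported job set `J` with `L ≥ C(J) + D(J)`, at least one
induced function `h_i` is `(L,l)`-good for `J`. -/
theorem exists_good_family {M I : Type*} [Fintype M] [DecidableEq M] [Fintype I]
    (c : ℝ) (hc : 1 ≤ c) (hM : 32 ≤ Fintype.card M)
    (hI : Fintype.card I = ⌊(Fintype.card M : ℝ) ^ c⌋₊)
    (S : Finset (List M)) (hS : S.Nonempty)
    (L l : ℕ) (hL0 : 0 < L) (hl0 : 0 < l)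
    (hL : (L : ℝ) ≤ 2 * (Fintype.card M : ℝ) ^ c)
    (hl : 150 * c * Real.log (Fintype.card M) / Real.log (Real.log (Fintype.card M)) ≤ (l : ℝ)) :
    ∃ g : Fin ⌈16 * (Real.log (S.card : ℝ) + (c + 1) * Real.log (Fintype.card M)) /
          Real.log l⌉₊ → (↥S × I → Fin L),
      IsGoodFamily S L l _ g := by
  have hjobs : (Fintype.card (S × I) : ℝ) ≤ #S * (Fintype.card M : ℝ) ^ c := by
    simpa [hI] using mul_le_mul_of_nonneg_left (Nat.floor_le (by positivity)) (Nat.cast_nonneg #S)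
  obtain ⟨g, hg⟩ := exists_good_family_general c hc (by omega) (fun p : S × I => (p.1 : List M)) #S
    (mod_cast hS.card_pos) hjobs L l hL0 hL hl
  exact ⟨g, fun J _ hCD => hg J (by omega)⟩
end

section
/- Fix a finite machine set M, a job set J over M, positive integers L and l with L ≥ D(J), and a function h : J → {0,…,L−1}. In any greedy weak-scheduler execution up to time 2·L·l, every job j that is live at time 2·L·l (st_{2Ll}(j) = 0) is complete (pos_{2Ll}(j) = len(j)). -/
open Finset

/-- A greedy weak-scheduler execution up to time `tmax`, for the job set given by the
finite type `J` with machine sequences `seq : J → List M`, small time step count `l`, and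
hash function `h : J → Fin L`. `pos t j` is the position of job `j` at time `t` and
`st t j ∈ {0,1}` its state (`1` = eliminated). At each step `t → t+1` an adversary first
pushes jobs forward to positions `pos'`; with `T := ⌊t/l⌋` and
`Q m := { j : st t j = 0, pos' j < len j, seq(j)_{pos' j} = m, h j + pos' j = T }`:
if `t ≡ 0 (mod l)` and `|Q m| > l` every `j ∈ Q m` is dropped (`st (t+1) j = 1`);
if `0 < |Q m| ≤ l` machine `m` works on exactly one job of `Q m` (its position is
incremented from `pos'`); all other jobs keep their pushed positions, and all jobs not
dropped keep their states. -/
def IsGreedyExec {M J : Type*} [Fintype M] [DecidableEq M] [Fintype J]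
    (seq : J → List M) {L : ℕ} (l : ℕ) (h : J → Fin L) (tmax : ℕ)
    (pos : ℕ → J → ℕ) (st : ℕ → J → Fin 2) : Prop :=
  (∀ t ≤ tmax, ∀ j, pos t j ≤ (seq j).length) ∧
  (∀ j, st 0 j = 0) ∧
  (∀ t < tmax, ∃ pos' : J → ℕ,
    (∀ j, pos t j ≤ pos' j ∧ pos' j ≤ (seq j).length) ∧
    (let Q : M → Finset J := fun m =>
      Finset.univ.filter fun j =>
        st t j = 0 ∧ pos' j < (seq j).length ∧ (seq j)[pos' j]? = some m ∧
          (h j : ℕ) + pos' j = t / l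
     ∃ worksel : M → Option J,
      (∀ m j, worksel m = some j → j ∈ Q m ∧ (Q m).card ≤ l) ∧
      (∀ m, 0 < (Q m).card → (Q m).card ≤ l → (worksel m).isSome) ∧
      (∀ j, (∃ m, worksel m = some j) → pos (t + 1) j = pos' j + 1) ∧
      (∀ j, (¬ ∃ m, worksel m = some j) → pos (t + 1) j = pos' j) ∧
      (∀ j, (t % l = 0 ∧ ∃ m, l < (Q m).card ∧ j ∈ Q m) → st (t + 1) j = 1) ∧
      (∀ j, (¬ (t % l = 0 ∧ ∃ m, l < (Q m).card ∧ j ∈ Q m)) → st (t + 1) j = st t j)))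

/-!
Say that the virtual time of job `j` is `h j + pos j`. During large time step `T`, no live
incomplete job has virtual time below `T`, and those with virtual time exactly `T` form the queues
of the machines. Virtual times never decrease, so within the large step no job enters a queue.
A queue that starts with more than `l` jobs is dropped; any other loses at least one job in each
small step until it is empty. Hence all queues are empty when the large step ends, and every live
incomplete job has virtual time at least `T + 1`. An incomplete job has virtual time below
`h j + len j`, so a live job must be complete once `T` reaches that value.
-/

section OnTrack

variable {M J : Type*} {seq : J → List M} {L : ℕ} {h : J → Fin L} {pos pos' : J → ℕ}
  {st st' : J → Fin 2} {T : ℕ}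

/-- Every live incomplete job has virtual time `h j + pos j` at least `T`, that is, no such job has
missed its slot in a large time step before `T`. -/
def OnTrack (seq : J → List M) (h : J → Fin L) (pos : J → ℕ) (st : J → Fin 2) (T : ℕ) : Prop :=
  ∀ j, st j = 0 → pos j < (seq j).length → T ≤ (h j : ℕ) + pos j

theorem OnTrack.mono (htrack : OnTrack seq h pos st T) (hpos : pos ≤ pos')
    (hlive : ∀ j, st' j = 0 → st j = 0) : OnTrack seq h pos' st' T := fun j hj hlt =>
  (htrack j (hlive j hj) ((hpos j).trans_lt hlt)).trans (Nat.add_le_add_left (hpos j) _)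

theorem OnTrack.pos_eq_length {j : J} (htrack : OnTrack seq h pos st T)
    (hpos : pos j ≤ (seq j).length) (hj : st j = 0) (hT : (h j : ℕ) + (seq j).length ≤ T) :
    pos j = (seq j).length := by
  by_contra hne
  have hlt : pos j < (seq j).length := lt_of_le_of_ne hpos hne
  have htime : T ≤ (h j : ℕ) + pos j := htrack j hj hlt
  omega

end OnTrack

section Queue

variable {M J : Type*} [DecidableEq M] [Fintype J] {seq : J → List M} {L : ℕ} {h : J → Fin L}
  {pos pos' : J → ℕ} {st st' : J → Fin 2} {T : ℕ} {m : M} {j : J}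

/-- The set `Q_m` of live jobs waiting at machine `m` to be worked on during large time step `T`,
for arbitrary positions: the scheduler uses it with the pushed ones. -/
def queue (seq : J → List M) (h : J → Fin L) (pos : J → ℕ) (st : J → Fin 2) (T : ℕ) (m : M) :
    Finset J :=
  univ.filter fun j =>
    st j = 0 ∧ pos j < (seq j).length ∧ (seq j)[pos j]? = some m ∧ (h j : ℕ) + pos j = T

theorem mem_queue : j ∈ queue seq h pos st T m ↔
    st j = 0 ∧ pos j < (seq j).length ∧ (seq j)[pos j]? = some m ∧ (h j : ℕ) + pos j = T := by
  simp only [queue, mem_filter, mem_univ, true_and]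

theorem OnTrack.queue_subset (htrack : OnTrack seq h pos st T) (hpos : pos ≤ pos')
    (hlive : ∀ j, st' j = 0 → st j = 0) : queue seq h pos' st' T m ⊆ queue seq h pos st T m := by
  intro j hj
  obtain ⟨hst, hlt, hget, htime⟩ := mem_queue.1 hj
  have hpos_eq : pos j = pos' j := by
    have hle : pos j ≤ pos' j := hpos j
    have htime' : T ≤ (h j : ℕ) + pos j := htrack j (hlive j hst) (hle.trans_lt hlt)
    omega
  rw [← hpos_eq] at hlt hget htime
  exact mem_queue.2 ⟨hlive j hst, hlt, hget, htime⟩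

theorem OnTrack.succ (htrack : OnTrack seq h pos st T)
    (hempty : ∀ m, queue seq h pos st T m = ∅) : OnTrack seq h pos st (T + 1) := by
  intro j hj hlt
  refine Nat.succ_le_of_lt (lt_of_le_of_ne (htrack j hj hlt) fun htime => ?_)
  have hmem : j ∈ queue seq h pos st T (seq j)[pos j] :=
    mem_queue.2 ⟨hj, hlt, List.getElem?_eq_getElem hlt, htime.symm⟩
  exact notMem_empty j (hempty _ ▸ hmem)

end Queue

section Step

variable {M J : Type*} [DecidableEq M] [Fintype J] {seq : J → List M} {L l t T : ℕ}
  {h : J → Fin L} {pos pushed next : J → ℕ} {st st' : J → Fin 2} {m : M}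

/-- What the scheduler guarantees about the step from time `t` to time `t + 1`, which takes
positions `pos` through the adversary's `pushed` to `next` and states `st` to `st'`. The selected
jobs are forgotten: all that is kept is that an admissible nonempty queue advances a job. -/
structure IsGreedyStep (seq : J → List M) (l : ℕ) (h : J → Fin L) (t : ℕ)
    (pos pushed next : J → ℕ) (st st' : J → Fin 2) : Prop where
  pos_le_pushed : pos ≤ pushed
  pushed_le_next : pushed ≤ next
  live_of_live_next : ∀ j, st' j = 0 → st j = 0
  not_live_of_lt_card : l ∣ t → ∀ m, l < #(queue seq h pushed st (t / l) m) →
    ∀ j ∈ queue seq h pushed st (t / l) m, st' j ≠ 0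
  exists_advanced : ∀ m, (queue seq h pushed st (t / l) m).Nonempty →
    #(queue seq h pushed st (t / l) m) ≤ l →
    ∃ j ∈ queue seq h pushed st (t / l) m, next j = pushed j + 1

namespace IsGreedyStep

theorem onTrack_pushed (hstep : IsGreedyStep seq l h t pos pushed next st st')
    (htrack : OnTrack seq h pos st T) : OnTrack seq h pushed st T :=
  htrack.mono hstep.pos_le_pushed fun _ => id

theorem onTrack_next (hstep : IsGreedyStep seq l h t pos pushed next st st')
    (htrack : OnTrack seq h pos st T) : OnTrack seq h next st' T :=
  (hstep.onTrack_pushed htrack).mono hstep.pushed_le_next hstep.live_of_live_next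

theorem queue_next_subset_queue_pushed (hstep : IsGreedyStep seq l h t pos pushed next st st')
    (htrack : OnTrack seq h pos st T) :
    queue seq h next st' T m ⊆ queue seq h pushed st T m :=
  (hstep.onTrack_pushed htrack).queue_subset hstep.pushed_le_next hstep.live_of_live_next

theorem card_queue_pushed_add_mod_le
    (hstep : IsGreedyStep seq l h t pos pushed next st st')
    (htrack : OnTrack seq h pos st (t / l))
    (hcard : ¬ l ∣ t → #(queue seq h pos st (t / l) m) + t % l ≤ l)
    (hne : (queue seq h next st' (t / l) m).Nonempty) :
    #(queue seq h pushed st (t / l) m) + t % l ≤ l := by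
  by_cases hdvd : l ∣ t
  · obtain ⟨j, hj⟩ := hne
    rw [Nat.mod_eq_zero_of_dvd hdvd, add_zero]
    by_contra! hlt
    exact hstep.not_live_of_lt_card hdvd m hlt j
      (hstep.queue_next_subset_queue_pushed htrack hj) (mem_queue.1 hj).1
  · calc #(queue seq h pushed st (t / l) m) + t % l
        ≤ #(queue seq h pos st (t / l) m) + t % l :=
          Nat.add_le_add_right
            (card_le_card (htrack.queue_subset hstep.pos_le_pushed fun _ => id)) _
      _ ≤ l := hcard hdvd

theorem card_queue_next_lt_card_queue_pushed
    (hstep : IsGreedyStep seq l h t pos pushed next st st')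
    (htrack : OnTrack seq h pos st (t / l))
    (hne : (queue seq h next st' (t / l) m).Nonempty)
    (hle : #(queue seq h pushed st (t / l) m) ≤ l) :
    #(queue seq h next st' (t / l) m) < #(queue seq h pushed st (t / l) m) := by
  have hsub := hstep.queue_next_subset_queue_pushed htrack (m := m)
  obtain ⟨k, hk, hnext⟩ := hstep.exists_advanced m (hne.mono hsub) hle
  have hk' : k ∉ queue seq h next st' (t / l) m := by
    intro hmem
    have htime := (mem_queue.1 hk).2.2.2
    have htime' := (mem_queue.1 hmem).2.2.2
    omega
  exact card_lt_card ((ssubset_iff_of_subset hsub).2 ⟨k, hk, hk'⟩)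

theorem card_queue_next_add_mod_lt (hl : 0 < l)
    (hstep : IsGreedyStep seq l h t pos pushed next st st')
    (htrack : OnTrack seq h pos st (t / l))
    (hcard : ¬ l ∣ t → #(queue seq h pos st (t / l) m) + t % l ≤ l) :
    #(queue seq h next st' (t / l) m) + t % l < l := by
  rcases (queue seq h next st' (t / l) m).eq_empty_or_nonempty with hempty | hne
  · simpa only [hempty, card_empty, zero_add] using Nat.mod_lt t hl
  · have hpushed := hstep.card_queue_pushed_add_mod_le htrack hcard hne
    have hlt := hstep.card_queue_next_lt_card_queue_pushed htrack hne (by omega)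
    omega

end IsGreedyStep

/-- The invariant of the scheduler at time `t`, with large time step `t / l` and small time step
`t % l`. Queue sizes are unrestricted at the start of a large step, before overfull queues have been
dropped. -/
structure IsTimely (seq : J → List M) (l : ℕ) (h : J → Fin L) (t : ℕ) (pos : J → ℕ)
    (st : J → Fin 2) : Prop where
  onTrack : OnTrack seq h pos st (t / l)
  card_queue_add_mod_le : ¬ l ∣ t → ∀ m, #(queue seq h pos st (t / l) m) + t % l ≤ l

theorem IsTimely.zero : IsTimely seq l h 0 pos st where
  onTrack _ _ _ := by simp only [Nat.zero_div, Nat.zero_le]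
  card_queue_add_mod_le hdvd := absurd (dvd_zero l) hdvd

theorem IsTimely.succ (hl : 0 < l) (htimely : IsTimely seq l h t pos st)
    (hstep : IsGreedyStep seq l h t pos pushed next st st') :
    IsTimely seq l h (t + 1) next st' := by
  have htrack := hstep.onTrack_next htimely.onTrack
  have hcard (m : M) : #(queue seq h next st' (t / l) m) + t % l < l :=
    hstep.card_queue_next_add_mod_lt hl htimely.onTrack
      fun hdvd => htimely.card_queue_add_mod_le hdvd m
  have hdiv := Nat.div_add_mod t l
  have hdiv' := Nat.div_add_mod (t + 1) l
  by_cases hdvd : l ∣ t + 1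
  · have hmod : t % l + 1 = l := by
      rw [Nat.succ_div_of_dvd hdvd, Nat.mod_eq_zero_of_dvd hdvd, mul_add] at hdiv'
      omega
    have hempty (m : M) : queue seq h next st' (t / l) m = ∅ := by
      have := hcard m
      exact card_eq_zero.1 (by omega)
    exact ⟨by simpa only [Nat.succ_div_of_dvd hdvd] using htrack.succ hempty,
      fun hndvd => absurd hdvd hndvd⟩
  · have hmod : (t + 1) % l = t % l + 1 := by
      rw [Nat.succ_div_of_not_dvd hdvd] at hdiv'
      omega
    refine ⟨by rwa [Nat.succ_div_of_not_dvd hdvd], fun _ m => ?_⟩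
    rw [Nat.succ_div_of_not_dvd hdvd, hmod]
    exact hcard m

end Step

theorem length_le_dilation {M J : Type*} [Fintype J] (seq : J → List M) (j : J) :
    (seq j).length ≤ dilation seq :=
  le_sup (f := fun j => (seq j).length) (mem_univ j)

section Execution

variable {M J : Type*} [Fintype M] [DecidableEq M] [Fintype J] {seq : J → List M} {L l tmax t : ℕ}
  {h : J → Fin L} {pos : ℕ → J → ℕ} {st : ℕ → J → Fin 2}

theorem IsGreedyExec.exists_isGreedyStep (hexec : IsGreedyExec seq l h tmax pos st)
    (ht : t < tmax) :
    ∃ pushed, IsGreedyStep seq l h t (pos t) pushed (pos (t + 1)) (st t) (st (t + 1)) := by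
  obtain ⟨pushed, hpush, worksel, worksel_mem, worksel_isSome, pos_worked, pos_idle, st_dropped,
    st_kept⟩ := hexec.2.2 t ht
  refine ⟨pushed, fun j => (hpush j).1, fun j => ?_, fun j hj => ?_, fun hdvd m hlt j hj => ?_,
    fun m hne hle => ?_⟩
  · by_cases hwork : ∃ m, worksel m = some j
    · exact (Nat.le_succ _).trans_eq (pos_worked j hwork).symm
    · exact (pos_idle j hwork).ge
  · rw [← hj]
    refine (st_kept j fun hdrop => ?_).symm
    exact zero_ne_one (hj.symm.trans (st_dropped j hdrop))
  · rw [st_dropped j ⟨Nat.mod_eq_zero_of_dvd hdvd, m, hlt, hj⟩]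
    exact one_ne_zero
  · obtain ⟨j, hj⟩ := Option.isSome_iff_exists.1 (worksel_isSome m hne.card_pos hle)
    exact ⟨j, (worksel_mem m j hj).1, pos_worked j ⟨m, hj⟩⟩

theorem IsGreedyExec.isTimely (hl : 0 < l) (hexec : IsGreedyExec seq l h tmax pos st)
    (ht : t ≤ tmax) : IsTimely seq l h t (pos t) (st t) := by
  induction t with
  | zero => exact IsTimely.zero
  | succ t ih =>
    obtain ⟨_, hstep⟩ := hexec.exists_isGreedyStep ht
    exact (ih (Nat.le_of_succ_le ht)).succ hl hstep

theorem live_implies_complete_general (hl : 0 < l) (hexec : IsGreedyExec seq l h tmax pos st)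
    (ht : t ≤ tmax) {j : J} (hlive : st t j = 0) (hdeadline : (h j : ℕ) + (seq j).length ≤ t / l) :
    pos t j = (seq j).length :=
  (hexec.isTimely hl ht).onTrack.pos_eq_length (hexec.1 t ht j) hlive hdeadline

end Execution

/-- If `L ≥ D(J)`, then in any greedy weak-scheduler execution up to time `2·L·l`, every
job `j` that is live at time `2·L·l` (`st_{2Ll}(j) = 0`) is complete
(`pos_{2Ll}(j) = len(j)`). -/
theorem live_implies_complete {M J : Type*} [Fintype M] [DecidableEq M] [Fintype J]
    (seq : J → List M) (L l : ℕ) (hL0 : 0 < L) (hl0 : 0 < l)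
    (hLD : dilation seq ≤ L) (h : J → Fin L)
    (pos : ℕ → J → ℕ) (st : ℕ → J → Fin 2)
    (hexec : IsGreedyExec seq l h (2 * L * l) pos st)
    (j : J) (hlive : st (2 * L * l) j = 0) :
    pos (2 * L * l) j = (seq j).length := by
  refine live_implies_complete_general hl0 hexec le_rfl hlive ?_
  rw [Nat.mul_div_cancel _ hl0, two_mul]
  exact add_le_add (h j).isLt.le ((length_le_dilation seq j).trans hLD)
end
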